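/- For every integer j ≥ 1 and all reals λ₁ > λ₂ > 0, writing x = (λ₁ + λ₂)/(2√(λ₁λ₂)) (so that x > 1), the following inequality holds: (λ₁·(j/2) − λ₂·(j/2 + 1))·P_j(x) ≤ ((λ₁ − λ₂)²/(4√(λ₁λ₂)))·P_j′(x), where P_j′ is the derivative of the j-th Legendre polynomial. Consequently, for each fixed λ₁ > 0 and j ≥ 1, the function λ₂ ↦ (λ₁ − λ₂)·λ₂^{j/2}·P_j((λ₁ + λ₂)/(2√(λ₁λ₂))) is nonincreasing on (0, λ₁). -/

import Mathlib

/-- The Legendre polynomials, as real functions: `P₀(x) = 1`, `P₁(x) = x`, and Bonnet's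
recursion `(j+1) P_{j+1}(x) = (2j+1) x P_j(x) - j P_{j-1}(x)` for `j ≥ 1`. -/
noncomputable def legendreP : ℕ → ℝ → ℝ
  | 0, _ => 1
  | 1, x => x
  | n + 2, x =>
      ((2 * (n : ℝ) + 3) * x * legendreP (n + 1) x - ((n : ℝ) + 1) * legendreP n x) /
        ((n : ℝ) + 2)

/-!
In the variable `t > 0` with `x = (t + t⁻¹) / 2`, put
`g(t) = (n + 2) P_{n+1}(x) - (n + 1) t P_n(x)`. The contiguous relations between `P_n`, `P_{n+1}`
and their derivatives give `(t ^ (n + 1) g(t))' = t ^ (n + 1) (t - t⁻¹) / 2 * P_n'(x)`, which is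
nonnegative for `t ≥ 1`, while `g(1) = 1`; hence `g > 0` on `[1, ∞)`, and on `(0, 1]` this is clear
from `P_n ≤ P_{n+1}`. For `t = √(λ₁ / λ₂)` and `j = n + 1` the two sides of the derivative
inequality differ by exactly `λ₂ g(t)`. Finally, the derivative in `λ₂` of
`(λ₁ - λ₂) λ₂ ^ (j / 2) P_j` is `λ₂ ^ (j / 2 - 1)` times the left side minus the right side.
-/

section LegendreRelations

lemma add_two_mul_legendreP_add_two (n : ℕ) (x : ℝ) :
    ((n : ℝ) + 2) * legendreP (n + 2) x =
      (2 * (n : ℝ) + 3) * x * legendreP (n + 1) x - ((n : ℝ) + 1) * legendreP n x := by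
  rw [legendreP]
  exact mul_div_cancel₀ _ (by positivity)

lemma differentiable_legendreP : ∀ n : ℕ, Differentiable ℝ (legendreP n)
  | 0 => differentiable_const 1
  | 1 => differentiable_id
  | n + 2 => by
    have hn := differentiable_legendreP n
    have hn' := differentiable_legendreP (n + 1)
    exact (((differentiable_id.const_mul _).mul hn').sub (hn.const_mul _)).div_const _

lemma hasDerivAt_legendreP (n : ℕ) (x : ℝ) :
    HasDerivAt (legendreP n) (deriv (legendreP n) x) x :=
  (differentiable_legendreP n x).hasDerivAt

lemma add_two_mul_deriv_legendreP_add_two (n : ℕ) (x : ℝ) :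
    ((n : ℝ) + 2) * deriv (legendreP (n + 2)) x =
      (2 * (n : ℝ) + 3) * (legendreP (n + 1) x + x * deriv (legendreP (n + 1)) x) -
        ((n : ℝ) + 1) * deriv (legendreP n) x := by
  have hleft := (hasDerivAt_legendreP (n + 2) x).const_mul ((n : ℝ) + 2)
  have hright := (((hasDerivAt_id' x).const_mul (2 * (n : ℝ) + 3)).mul
    (hasDerivAt_legendreP (n + 1) x)).sub ((hasDerivAt_legendreP n x).const_mul ((n : ℝ) + 1))
  have heq := hleft.unique
    (hright.congr_of_eventuallyEq (.of_forall (add_two_mul_legendreP_add_two n)))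
  linear_combination heq

-- Each relation at `n + 1` needs both at `n`, so they are proved by a joint induction.
lemma legendreP_succ_relations (n : ℕ) (x : ℝ) :
    deriv (legendreP (n + 1)) x =
        x * deriv (legendreP n) x + ((n : ℝ) + 1) * legendreP n x ∧
      ((n : ℝ) + 1) * legendreP (n + 1) x =
        (x ^ 2 - 1) * deriv (legendreP n) x + ((n : ℝ) + 1) * x * legendreP n x := by
  induction n with
  | zero => simp [legendreP]
  | succ n ih =>
    obtain ⟨hderiv, hvalue⟩ := ih
    have hne : (n : ℝ) + 2 ≠ 0 := by positivity
    push_cast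
    constructor
    · apply mul_left_cancel₀ hne
      linear_combination add_two_mul_deriv_legendreP_add_two n x + (n + 1) * x * hderiv -
        (n + 1) * hvalue
    · linear_combination add_two_mul_legendreP_add_two n x - (x ^ 2 - 1) * hderiv + x * hvalue

lemma deriv_legendreP_succ (n : ℕ) (x : ℝ) :
    deriv (legendreP (n + 1)) x = x * deriv (legendreP n) x + ((n : ℝ) + 1) * legendreP n x :=
  (legendreP_succ_relations n x).1

lemma succ_mul_legendreP_succ (n : ℕ) (x : ℝ) :
    ((n : ℝ) + 1) * legendreP (n + 1) x =
      (x ^ 2 - 1) * deriv (legendreP n) x + ((n : ℝ) + 1) * x * legendreP n x :=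
  (legendreP_succ_relations n x).2

lemma sq_sub_one_mul_deriv_legendreP_succ (n : ℕ) (x : ℝ) :
    (x ^ 2 - 1) * deriv (legendreP (n + 1)) x =
      ((n : ℝ) + 1) * (x * legendreP (n + 1) x - legendreP n x) := by
  linear_combination (x ^ 2 - 1) * deriv_legendreP_succ n x - x * succ_mul_legendreP_succ n x

lemma legendreP_apply_one (n : ℕ) : legendreP n 1 = 1 := by
  induction n with
  | zero => rw [legendreP]
  | succ n ih =>
    have hne : (n : ℝ) + 1 ≠ 0 := by positivity
    apply mul_left_cancel₀ hne
    rw [succ_mul_legendreP_succ, ih]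
    ring

end LegendreRelations

section Positivity

variable {x : ℝ}

lemma legendreP_pos_and_deriv_nonneg (n : ℕ) (hx : 1 ≤ x) :
    0 < legendreP n x ∧ 0 ≤ deriv (legendreP n) x := by
  induction n with
  | zero => simp [legendreP]
  | succ n ih =>
    obtain ⟨hpos, hderiv⟩ := ih
    have hsq : 0 ≤ x ^ 2 - 1 := sub_nonneg.2 (one_le_pow₀ hx)
    constructor
    · have hmul : 0 < ((n : ℝ) + 1) * legendreP (n + 1) x := by
        rw [succ_mul_legendreP_succ]
        positivity
      exact pos_of_mul_pos_right hmul (by positivity)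
    · rw [deriv_legendreP_succ]
      positivity

lemma legendreP_pos (n : ℕ) (hx : 1 ≤ x) : 0 < legendreP n x :=
  (legendreP_pos_and_deriv_nonneg n hx).1

lemma deriv_legendreP_nonneg (n : ℕ) (hx : 1 ≤ x) : 0 ≤ deriv (legendreP n) x :=
  (legendreP_pos_and_deriv_nonneg n hx).2

lemma legendreP_le_legendreP_succ (n : ℕ) (hx : 1 ≤ x) :
    legendreP n x ≤ legendreP (n + 1) x := by
  have hn : (0 : ℝ) < n + 1 := by positivity
  refine le_of_mul_le_mul_left ?_ hn
  calc ((n : ℝ) + 1) * legendreP n x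
      ≤ ((n : ℝ) + 1) * x * legendreP n x := by
        gcongr
        · exact (legendreP_pos n hx).le
        · exact le_mul_of_one_le_right hn.le hx
    _ ≤ (x ^ 2 - 1) * deriv (legendreP n) x + ((n : ℝ) + 1) * x * legendreP n x :=
        le_add_of_nonneg_left
          (mul_nonneg (sub_nonneg.2 (one_le_pow₀ hx)) (deriv_legendreP_nonneg n hx))
    _ = ((n : ℝ) + 1) * legendreP (n + 1) x := (succ_mul_legendreP_succ n x).symm

end Positivity

section Joukowsky

/-- The Joukowsky map `t ↦ (t + t⁻¹) / 2`, which parametrises `[1, ∞)` by `t ≥ 1` so that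
`√(x² - 1)` becomes rational in `t`. -/
noncomputable def joukowsky (t : ℝ) : ℝ := (t + t⁻¹) / 2

variable {t : ℝ}

lemma joukowsky_one : joukowsky 1 = 1 := by norm_num [joukowsky]

lemma joukowsky_sq_sub_one (ht : t ≠ 0) : joukowsky t ^ 2 - 1 = ((t - t⁻¹) / 2) ^ 2 := by
  rw [joukowsky]
  field

lemma one_le_joukowsky (ht : 0 < t) : 1 ≤ joukowsky t := by
  have hsq : 0 ≤ joukowsky t ^ 2 - 1 := by
    rw [joukowsky_sq_sub_one ht.ne']
    positivity
  have hnonneg : 0 ≤ joukowsky t := by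
    rw [joukowsky]
    positivity
  exact (one_le_sq_iff₀ hnonneg).1 (sub_nonneg.1 hsq)

lemma hasDerivAt_joukowsky (ht : t ≠ 0) :
    HasDerivAt joukowsky ((t - t⁻¹) / 2 / t) t := by
  refine (((hasDerivAt_id' t).add (hasDerivAt_inv ht)).div_const 2).congr_deriv ?_
  field

end Joukowsky

section LegendreGap

/-- The difference `(n + 2) P_{n+1}(x) - (n + 1) t P_n(x)` at `x = (t + t⁻¹) / 2`. Up to a positive
factor it is the difference of the two sides of the derivative inequality for `P_{n+1}`. -/
noncomputable def legendreGap (n : ℕ) (t : ℝ) : ℝ :=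
  ((n : ℝ) + 2) * legendreP (n + 1) (joukowsky t) - ((n : ℝ) + 1) * t * legendreP n (joukowsky t)

variable {t : ℝ}

lemma legendreGap_one (n : ℕ) : legendreGap n 1 = 1 := by
  rw [legendreGap, joukowsky_one, legendreP_apply_one, legendreP_apply_one]
  ring

lemma hasDerivAt_pow_mul_legendreGap (n : ℕ) (ht : t ≠ 0) :
    HasDerivAt (fun s => s ^ (n + 1) * legendreGap n s)
      (t ^ (n + 1) * ((t - t⁻¹) / 2) * deriv (legendreP n) (joukowsky t)) t := by
  have hP (m : ℕ) := (hasDerivAt_legendreP m (joukowsky t)).comp t (hasDerivAt_joukowsky ht)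
  have hgap := ((hP (n + 1)).const_mul ((n : ℝ) + 2)).sub
    (((hasDerivAt_id' t).const_mul ((n : ℝ) + 1)).mul (hP n))
  refine ((hasDerivAt_pow (n + 1) t).mul hgap).congr_deriv ?_
  have hvalue := succ_mul_legendreP_succ n (joukowsky t)
  rw [joukowsky_sq_sub_one ht] at hvalue
  simp only [Function.comp_apply, Pi.mul_apply, Pi.sub_apply, deriv_legendreP_succ,
    Nat.add_sub_cancel, Nat.cast_add, Nat.cast_one]
  simp only [joukowsky] at hvalue ⊢
  linear_combination (norm := field) t ^ n * ((n : ℝ) + 2) * hvalue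

lemma monotoneOn_pow_mul_legendreGap (n : ℕ) :
    MonotoneOn (fun t => t ^ (n + 1) * legendreGap n t) (Set.Ici 1) := by
  have hderiv (t : ℝ) (ht : 1 ≤ t) :=
    hasDerivAt_pow_mul_legendreGap n (zero_lt_one.trans_le ht).ne'
  refine monotoneOn_of_hasDerivWithinAt_nonneg (convex_Ici 1)
    (fun t ht => (hderiv t ht).continuousAt.continuousWithinAt)
    (fun t ht => (hderiv t (interior_subset ht)).hasDerivWithinAt) fun t ht => ?_
  have ht1 : 1 ≤ t := interior_subset ht
  have ht0 : 0 < t := zero_lt_one.trans_le ht1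
  have hdiff : 0 ≤ t - t⁻¹ := sub_nonneg.2 ((inv_le_one_of_one_le₀ ht1).trans ht1)
  have hP := deriv_legendreP_nonneg n (one_le_joukowsky ht0)
  positivity

lemma legendreGap_pos (n : ℕ) (ht : 0 < t) : 0 < legendreGap n t := by
  rcases le_total 1 t with h1t | ht1
  · have hmono := monotoneOn_pow_mul_legendreGap n (Set.mem_Ici.2 le_rfl) (Set.mem_Ici.2 h1t) h1t
    simp only [one_pow, legendreGap_one, mul_one] at hmono
    exact pos_of_mul_pos_right (zero_lt_one.trans_le hmono) (by positivity)
  · have hx := one_le_joukowsky ht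
    have hP := legendreP_pos n hx
    refine sub_pos.2 ?_
    calc ((n : ℝ) + 1) * t * legendreP n (joukowsky t)
        ≤ ((n : ℝ) + 1) * 1 * legendreP n (joukowsky t) := by gcongr
      _ < ((n : ℝ) + 2) * legendreP n (joukowsky t) := by
          gcongr
          linarith
      _ ≤ ((n : ℝ) + 2) * legendreP (n + 1) (joukowsky t) := by
          gcongr
          exact legendreP_le_legendreP_succ n hx

end LegendreGap

section TwoVariables

variable {l1 l2 : ℝ}

lemma add_div_two_mul_sqrt_eq_joukowsky (h1 : 0 < l1) (h2 : 0 < l2) :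
    (l1 + l2) / (2 * √(l1 * l2)) = joukowsky (√(l1 * l2) / l2) := by
  have hsq : √(l1 * l2) ^ 2 = l1 * l2 := Real.sq_sqrt (mul_pos h1 h2).le
  rw [joukowsky]
  field_simp
  linear_combination -hsq

lemma sq_sub_div_four_mul_sqrt (h1 : 0 < l1) (h2 : 0 < l2) :
    (l1 - l2) ^ 2 / (4 * √(l1 * l2)) =
      √(l1 * l2) * (((l1 + l2) / (2 * √(l1 * l2))) ^ 2 - 1) := by
  have hsq : √(l1 * l2) ^ 2 = l1 * l2 := Real.sq_sqrt (mul_pos h1 h2).le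
  field_simp
  linear_combination 16 * hsq

lemma mul_deriv_legendreP_succ_sub_eq_mul_legendreGap (n : ℕ) (h1 : 0 < l1) (h2 : 0 < l2) :
    (l1 - l2) ^ 2 / (4 * √(l1 * l2)) *
          deriv (legendreP (n + 1)) ((l1 + l2) / (2 * √(l1 * l2))) -
        (l1 * (((n + 1 : ℕ) : ℝ) / 2) - l2 * (((n + 1 : ℕ) : ℝ) / 2 + 1)) *
          legendreP (n + 1) ((l1 + l2) / (2 * √(l1 * l2))) =
      l2 * legendreGap n (√(l1 * l2) / l2) := by
  have hs : √(l1 * l2) ≠ 0 := (Real.sqrt_pos.2 (mul_pos h1 h2)).ne'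
  have hx : √(l1 * l2) * ((l1 + l2) / (2 * √(l1 * l2))) = (l1 + l2) / 2 := by field
  have ht : l2 * (√(l1 * l2) / l2) = √(l1 * l2) := mul_div_cancel₀ _ h2.ne'
  rw [legendreGap, ← add_div_two_mul_sqrt_eq_joukowsky h1 h2, sq_sub_div_four_mul_sqrt h1 h2]
  generalize (l1 + l2) / (2 * √(l1 * l2)) = x at *
  push_cast
  linear_combination √(l1 * l2) * sq_sub_one_mul_deriv_legendreP_succ n x +
    (n + 1) * legendreP (n + 1) x * hx + (n + 1) * legendreP n x * ht

theorem mul_legendreP_lt_mul_deriv_legendreP (j : ℕ) (h1 : 0 < l1) (h2 : 0 < l2) :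
    (l1 * ((j : ℝ) / 2) - l2 * ((j : ℝ) / 2 + 1)) *
        legendreP j ((l1 + l2) / (2 * √(l1 * l2))) <
      (l1 - l2) ^ 2 / (4 * √(l1 * l2)) *
        deriv (legendreP j) ((l1 + l2) / (2 * √(l1 * l2))) := by
  cases j with
  | zero => simpa [legendreP] using h2
  | succ n =>
    rw [← sub_pos, mul_deriv_legendreP_succ_sub_eq_mul_legendreGap n h1 h2]
    have hs : 0 < √(l1 * l2) := Real.sqrt_pos.2 (mul_pos h1 h2)
    exact mul_pos h2 (legendreGap_pos n (div_pos hs h2))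

lemma hasDerivAt_add_div_two_mul_sqrt (h1 : 0 < l1) (h2 : 0 < l2) :
    HasDerivAt (fun l => (l1 + l) / (2 * √(l1 * l))) (-(l1 - l2) / (4 * √(l1 * l2) * l2)) l2 := by
  have hsq : √(l1 * l2) ^ 2 = l1 * l2 := Real.sq_sqrt (mul_pos h1 h2).le
  have hsqrt := ((hasDerivAt_id' l2).const_mul l1).sqrt (mul_pos h1 h2).ne'
  refine (((hasDerivAt_id' l2).const_add l1).div (hsqrt.const_mul 2) (by positivity)).congr_deriv ?_
  field_simp
  rw [hsq]
  ring

lemma hasDerivAt_sub_mul_rpow_mul_legendreP (j : ℕ) (h1 : 0 < l1) (h2 : 0 < l2) :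
    HasDerivAt
      (fun l => (l1 - l) * l ^ ((j : ℝ) / 2) * legendreP j ((l1 + l) / (2 * √(l1 * l))))
      (l2 ^ ((j : ℝ) / 2 - 1) *
        ((l1 * ((j : ℝ) / 2) - l2 * ((j : ℝ) / 2 + 1)) *
            legendreP j ((l1 + l2) / (2 * √(l1 * l2))) -
          (l1 - l2) ^ 2 / (4 * √(l1 * l2)) *
            deriv (legendreP j) ((l1 + l2) / (2 * √(l1 * l2))))) l2 := by
  have hs : √(l1 * l2) ≠ 0 := (Real.sqrt_pos.2 (mul_pos h1 h2)).ne'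
  have hpow : l2 ^ ((j : ℝ) / 2) = l2 ^ ((j : ℝ) / 2 - 1) * l2 := by
    rw [← Real.rpow_add_one h2.ne', sub_add_cancel]
  have hP := (hasDerivAt_legendreP j _).comp l2 (hasDerivAt_add_div_two_mul_sqrt h1 h2)
  have hprod := (((hasDerivAt_id' l2).const_sub l1).mul
    (Real.hasDerivAt_rpow_const (p := (j : ℝ) / 2) (.inl h2.ne'))).mul hP
  refine hprod.congr_deriv ?_
  simp only [Function.comp_apply, Pi.mul_apply, hpow]
  field

theorem strictAntiOn_sub_mul_rpow_mul_legendreP (j : ℕ) (h1 : 0 < l1) :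
    StrictAntiOn
      (fun l => (l1 - l) * l ^ ((j : ℝ) / 2) * legendreP j ((l1 + l) / (2 * √(l1 * l))))
      (Set.Ioi 0) := by
  have hderiv (l : ℝ) (hl : 0 < l) := hasDerivAt_sub_mul_rpow_mul_legendreP j h1 hl
  refine strictAntiOn_of_hasDerivWithinAt_neg (convex_Ioi 0)
    (fun l hl => (hderiv l hl).continuousAt.continuousWithinAt)
    (fun l hl => (hderiv l (interior_subset hl)).hasDerivWithinAt) fun l hl => ?_
  have hl0 : 0 < l := interior_subset hl
  exact mul_neg_of_pos_of_neg (Real.rpow_pos_of_pos hl0 _)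
    (sub_neg.2 (mul_legendreP_lt_mul_deriv_legendreP j h1 hl0))

end TwoVariables

theorem legendre_derivative_inequality_and_antitone_general (j : ℕ) (l1 : ℝ) (h1 : 0 < l1) :
    (∀ l2 : ℝ, 0 < l2 →
        (l1 * ((j : ℝ) / 2) - l2 * ((j : ℝ) / 2 + 1)) *
            legendreP j ((l1 + l2) / (2 * √(l1 * l2)))
          < (l1 - l2) ^ 2 / (4 * √(l1 * l2)) *
              deriv (legendreP j) ((l1 + l2) / (2 * √(l1 * l2))))
    ∧ StrictAntiOn
        (fun l2 : ℝ =>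
          (l1 - l2) * l2 ^ ((j : ℝ) / 2) * legendreP j ((l1 + l2) / (2 * √(l1 * l2))))
        (Set.Ioi 0) :=
  ⟨fun _ h2 => mul_legendreP_lt_mul_deriv_legendreP j h1 h2,
    strictAntiOn_sub_mul_rpow_mul_legendreP j h1⟩

/-- For `j ≥ 1` and `λ₁ > λ₂ > 0`, with `x = (λ₁+λ₂)/(2√(λ₁λ₂))`,
`(λ₁ j/2 - λ₂ (j/2+1)) P_j(x) ≤ ((λ₁-λ₂)²/(4√(λ₁λ₂))) P_j'(x)`; consequently, for each fixed
`λ₁ > 0`, the function `λ₂ ↦ (λ₁-λ₂) λ₂^{j/2} P_j((λ₁+λ₂)/(2√(λ₁λ₂)))` is nonincreasing on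
`(0, λ₁)`. -/
theorem legendre_derivative_inequality_and_antitone (j : ℕ) (hj : 1 ≤ j) :
    (∀ l1 l2 : ℝ, 0 < l2 → l2 < l1 →
        (l1 * ((j : ℝ) / 2) - l2 * ((j : ℝ) / 2 + 1)) *
            legendreP j ((l1 + l2) / (2 * Real.sqrt (l1 * l2)))
          ≤ (l1 - l2) ^ 2 / (4 * Real.sqrt (l1 * l2)) *
              deriv (legendreP j) ((l1 + l2) / (2 * Real.sqrt (l1 * l2))))
    ∧ ∀ l1 : ℝ, 0 < l1 →
        AntitoneOn
          (fun l2 : ℝ =>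
            (l1 - l2) * l2 ^ ((j : ℝ) / 2) *
              legendreP j ((l1 + l2) / (2 * Real.sqrt (l1 * l2))))
          (Set.Ioo 0 l1) := by
  exact ⟨fun l1 l2 h2 h12 =>
      ((legendre_derivative_inequality_and_antitone_general j l1 (h2.trans h12)).1 l2 h2).le,
    fun l1 h1 => (legendre_derivative_inequality_and_antitone_general j l1 h1).2.antitoneOn.mono
      Set.Ioo_subset_Ioi_self⟩
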